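/- Let r(z) = e^{−1/z} for z < 0. Then there exists b̃ < 0 such that for every z < b̃ one has 0 < r'(z) ≤ 1/√2 and r(z)·r''(z) > 2·r'(z)²·(r'(z)²+1). -/

import Mathlib

/-!
Once `r' ^ 2 ≤ 1 / 2`, the inequality `2 * r' ^ 2 * (r' ^ 2 + 1) < r * r''` follows from the
homogeneous one `3 * r' ^ 2 < r * r''`. For `r z = exp (c / z)` the latter reduces to
`c ^ 2 < c * z`, which for `c < 0` means `z < c`, and `r'` tends to `0` at `-∞`.
-/

open Filter Topology

section ExpDiv

variable {c z : ℝ}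

theorem hasDerivAt_exp_div (c : ℝ) (hz : z ≠ 0) :
    HasDerivAt (fun x ↦ Real.exp (c / x)) (Real.exp (c / z) * (-c / z ^ 2)) z := by
  simpa using ((hasDerivAt_const z c).fun_div (hasDerivAt_id' z) hz).exp

theorem deriv_exp_div (c : ℝ) (hz : z ≠ 0) :
    deriv (fun x ↦ Real.exp (c / x)) z = Real.exp (c / z) * (-c / z ^ 2) :=
  (hasDerivAt_exp_div c hz).deriv

theorem deriv_deriv_exp_div (c : ℝ) (hz : z ≠ 0) :
    deriv (deriv fun x ↦ Real.exp (c / x)) z =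
      Real.exp (c / z) * (c ^ 2 / z ^ 4 + 2 * c / z ^ 3) := by
  have deriv_eq : deriv (fun x ↦ Real.exp (c / x)) =ᶠ[𝓝 z]
      fun x ↦ Real.exp (c / x) * (-c / x ^ 2) := by
    filter_upwards [eventually_ne_nhds hz] with x hx using deriv_exp_div c hx
  have hasDerivAt_factor : HasDerivAt (fun x : ℝ ↦ -c / x ^ 2) (2 * c / z ^ 3) z := by
    refine ((hasDerivAt_const z (-c)).fun_div (hasDerivAt_pow 2 z)
      (pow_ne_zero 2 hz)).congr_deriv ?_
    field_simp
    ring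
  rw [deriv_eq.deriv_eq, ((hasDerivAt_exp_div c hz).fun_mul hasDerivAt_factor).deriv]
  ring

theorem deriv_exp_div_pos (hc : c < 0) (hz : z ≠ 0) :
    0 < deriv (fun x ↦ Real.exp (c / x)) z := by
  rw [deriv_exp_div c hz]
  have := neg_pos.2 hc
  positivity

theorem tendsto_deriv_exp_div_atBot (c : ℝ) :
    Tendsto (deriv fun x ↦ Real.exp (c / x)) atBot (𝓝 0) := by
  have exp_tendsto : Tendsto (fun x : ℝ ↦ Real.exp (c / x)) atBot (𝓝 (Real.exp 0)) :=
    (tendsto_const_nhds.div_atBot tendsto_id).rexp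
  have factor_tendsto : Tendsto (fun x : ℝ ↦ -c / x ^ 2) atBot (𝓝 0) :=
    tendsto_const_nhds.div_atTop <| by
      simpa [sq] using tendsto_id.atBot_mul_atBot₀ (tendsto_id (α := ℝ))
  have deriv_eq : (fun x ↦ Real.exp (c / x) * (-c / x ^ 2)) =ᶠ[atBot]
      deriv fun x ↦ Real.exp (c / x) := by
    filter_upwards [eventually_ne_atBot 0] with x hx using (deriv_exp_div c hx).symm
  simpa using (exp_tendsto.mul factor_tendsto).congr' deriv_eq

theorem three_mul_sq_deriv_exp_div_lt (h : c ^ 2 < c * z) :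
    3 * deriv (fun x ↦ Real.exp (c / x)) z ^ 2 <
      Real.exp (c / z) * deriv (deriv fun x ↦ Real.exp (c / x)) z := by
  have hz : z ≠ 0 := by
    rintro rfl
    nlinarith [sq_nonneg c]
  rw [deriv_exp_div c hz, deriv_deriv_exp_div c hz, ← sub_pos]
  have gap_eq : Real.exp (c / z) * (Real.exp (c / z) * (c ^ 2 / z ^ 4 + 2 * c / z ^ 3)) -
      3 * (Real.exp (c / z) * (-c / z ^ 2)) ^ 2 =
      2 * Real.exp (c / z) ^ 2 * (c * z - c ^ 2) / z ^ 4 := by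
    field_simp
    ring
  rw [gap_eq]
  have := sub_pos.2 h
  positivity

end ExpDiv

theorem two_mul_sq_mul_sq_add_one_lt {p q : ℝ} (hp : p ^ 2 ≤ 1 / 2) (hpq : 3 * p ^ 2 < q) :
    2 * p ^ 2 * (p ^ 2 + 1) < q :=
  calc
    2 * p ^ 2 * (p ^ 2 + 1) ≤ 2 * p ^ 2 * (1 / 2 + 1) := by gcongr
    _ = 3 * p ^ 2 := by ring
    _ < q := hpq

theorem settingRS_of_exp_general {c : ℝ} (hc : c < 0) :
    let r : ℝ → ℝ := fun z => Real.exp (c / z)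
    ∃ btilde < (0 : ℝ), ∀ z < btilde,
      (0 < deriv r z ∧ deriv r z ≤ 1 / Real.sqrt 2) ∧
      r z * deriv (deriv r) z > 2 * (deriv r z) ^ 2 * ((deriv r z) ^ 2 + 1) := by
  intro r
  have deriv_small : ∀ᶠ z in atBot, deriv r z ≤ 1 / √2 :=
    (tendsto_deriv_exp_div_atBot c).eventually_le_const (by positivity)
  obtain ⟨b, hb⟩ := eventually_atBot.1 deriv_small
  refine ⟨min b c, min_lt_of_right_lt hc, fun z hz ↦ ?_⟩
  obtain ⟨hzb, hzc⟩ := lt_min_iff.1 hz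
  have deriv_pos : 0 < deriv r z := deriv_exp_div_pos hc (hzc.trans hc).ne
  have deriv_le : deriv r z ≤ 1 / √2 := hb z hzb.le
  have sq_deriv_le : deriv r z ^ 2 ≤ 1 / 2 :=
    calc
      deriv r z ^ 2 ≤ (1 / √2) ^ 2 := by gcongr
      _ = 1 / 2 := by simp
  have sq_lt_mul : c ^ 2 < c * z := by simpa [sq] using mul_lt_mul_of_neg_left hzc hc
  exact ⟨⟨deriv_pos, deriv_le⟩,
    two_mul_sq_mul_sq_add_one_lt sq_deriv_le (three_mul_sq_deriv_exp_div_lt sq_lt_mul)⟩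

/-- For `r(z) = e^{−1/z}` on `(−∞,0)` there exists `b̃ < 0` such that every `z < b̃`
satisfies the conditions of Setting RS: `0 < r'(z) ≤ 1/√2` and
`r(z)·r''(z) > 2·r'(z)²·(r'(z)²+1)`. -/
theorem settingRS_of_exp :
    let r : ℝ → ℝ := fun z => Real.exp (-1 / z)
    ∃ btilde < (0 : ℝ), ∀ z < btilde,
      (0 < deriv r z ∧ deriv r z ≤ 1 / Real.sqrt 2) ∧
      r z * deriv (deriv r) z > 2 * (deriv r z) ^ 2 * ((deriv r z) ^ 2 + 1) :=
  settingRS_of_exp_general neg_one_lt_zero
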